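/- For every delivery instance and every MMS allocation π, there exists an allocation π' that is both MMS and non-wasteful and satisfies cost(π'_i) ≤ cost(π_i) for every agent i. In particular, every delivery instance admits an allocation that is simultaneously MMS and non-wasteful. -/

import Mathlib

/-- A delivery instance: a finite tree rooted at the hub (encoded by a parent
function `par`; the edges of the tree are the pairs `{v, par v}` for `v ≠ hub`),
positive edge weights (`w v` is the weight of the edge between `v` and its
parent, for `v ≠ hub`), and `n` agents. -/
structure DeliveryInstance where
  V : Type
  fintypeV : Fintype V
  decEqV : DecidableEq V
  hub : V
  par : V → V
  w : V → ℝ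
  par_hub : par hub = hub
  reaches_hub : ∀ v : V, ∃ k : ℕ, par^[k] v = hub
  w_pos : ∀ v : V, v ≠ hub → 0 < w v
  n : ℕ
  n_pos : 0 < n

attribute [instance] DeliveryInstance.fintypeV DeliveryInstance.decEqV

namespace DeliveryInstance

variable (I : DeliveryInstance)

/-- `u` lies on the path from the hub to `v` (equivalently, `u` is a weak
ancestor of `v` in the tree rooted at the hub). -/
def Anc (u v : I.V) : Prop := ∃ k : ℕ, I.par^[k] v = u

/-- A leaf of the tree rooted at the hub: a vertex with no children. -/
def IsLeaf (v : I.V) : Prop := ∀ u : I.V, I.par u = v → u = v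

/-- The set of leaves of the topology. -/
def leaves : Set I.V := {v : I.V | I.IsLeaf v}

/-- The instance is unweighted if every edge has weight 1. -/
def Unweighted : Prop := ∀ v : I.V, v ≠ I.hub → I.w v = 1

/-- The cost of servicing a set `A` of orders: the total weight of the edges of
the tree that lie on the path from the hub to some vertex of `A` (the edge
between `u ≠ hub` and its parent lies on such a path iff `u` is a weak ancestor
of a member of `A`).  In particular `cost ∅ = 0`. -/
noncomputable def cost (A : Set I.V) : ℝ :=
  ∑ u : I.V, Set.indicator {u : I.V | u ≠ I.hub ∧ ∃ v ∈ A, I.Anc u v} I.w u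

/-- The bundle of agent `i` under allocation `π`: the set of orders serviced by `i`. -/
def bundle (π : I.V → Fin I.n) (i : Fin I.n) : Set I.V :=
  {v : I.V | v ≠ I.hub ∧ π v = i}

/-- An allocation is non-wasteful if every order `v` is serviced by an agent
that also services some leaf of the subtree rooted at `v`. -/
def NonWasteful (π : I.V → Fin I.n) : Prop :=
  ∀ v : I.V, v ≠ I.hub → ∃ l : I.V, I.IsLeaf l ∧ I.Anc v l ∧ π l = π v

/-- Total (utilitarian) cost of an allocation. -/
noncomputable def totalCost (π : I.V → Fin I.n) : ℝ :=
  ∑ i : Fin I.n, I.cost (I.bundle π i)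

/-- The maximum bundle cost of an allocation. -/
noncomputable def maxCost (π : I.V → Fin I.n) : ℝ :=
  Finset.univ.sup' ⟨⟨0, I.n_pos⟩, Finset.mem_univ _⟩ fun i : Fin I.n => I.cost (I.bundle π i)

/-- The minimax (MMS) share of the instance: the minimum over all allocations
of the maximum bundle cost. -/
noncomputable def MMSshare : ℝ :=
  Finset.univ.inf' ⟨fun _ => ⟨0, I.n_pos⟩, Finset.mem_univ _⟩
    fun π : I.V → Fin I.n => I.maxCost π

/-- An allocation is MMS if every bundle costs at most the MMS share. -/
def IsMMS (π : I.V → Fin I.n) : Prop :=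
  ∀ i : Fin I.n, I.cost (I.bundle π i) ≤ I.MMSshare

/-- Pareto optimality: no allocation makes every agent weakly better off and
some agent strictly better off. -/
def ParetoOptimal (π : I.V → Fin I.n) : Prop :=
  ¬ ∃ π' : I.V → Fin I.n,
      (∀ i : Fin I.n, I.cost (I.bundle π' i) ≤ I.cost (I.bundle π i)) ∧
      ∃ j : Fin I.n, I.cost (I.bundle π' j) < I.cost (I.bundle π j)

/-- Utilitarian optimality: minimizes the sum of bundle costs. -/
def UtilitarianOptimal (π : I.V → Fin I.n) : Prop :=
  ∀ π' : I.V → Fin I.n, I.totalCost π ≤ I.totalCost π'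

/-- Egalitarian optimality: minimizes the maximum bundle cost. -/
def EgalitarianOptimal (π : I.V → Fin I.n) : Prop :=
  ∀ π' : I.V → Fin I.n, I.maxCost π ≤ I.maxCost π'

/-- Envy-freeness. -/
def EF (π : I.V → Fin I.n) : Prop :=
  ∀ i j : Fin I.n, I.cost (I.bundle π i) ≤ I.cost (I.bundle π j)

/-- Envy-freeness up to one order. -/
def EF1 (π : I.V → Fin I.n) : Prop :=
  ∀ i j : Fin I.n,
    I.bundle π i = ∅ ∨ ∃ v ∈ I.bundle π i, I.cost (I.bundle π i \ {v}) ≤ I.cost (I.bundle π j)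

end DeliveryInstance

namespace DeliveryInstance

theorem aux_leaf_desc (I : DeliveryInstance) {v x : I.V} (hv : I.IsLeaf v) :
    ∀ k : ℕ, I.par^[k] x = v → x = v := by
  intro k
  induction k with
  | zero => intro h; simpa using h
  | succ k ih =>
    intro h
    rw [Function.iterate_succ_apply'] at h
    exact ih (hv _ h)

theorem aux_anc_trans (I : DeliveryInstance) {u v x : I.V} (h1 : I.Anc u v) (h2 : I.Anc v x) :
    I.Anc u x := by
  obtain ⟨a, ha⟩ := h1
  obtain ⟨b, hb⟩ := h2
  exact ⟨a + b, by rw [Function.iterate_add_apply, hb, ha]⟩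

theorem aux_exists_leaf (I : DeliveryInstance) (v : I.V) :
    ∃ l : I.V, I.IsLeaf l ∧ I.Anc v l := by
  classical
  let d : I.V → ℕ := fun x => Nat.find (I.reaches_hub x)
  have hd : ∀ u : I.V, u ≠ I.hub → d (I.par u) < d u := by
    intro u hu
    have h := Nat.find_spec (I.reaches_hub u)
    change I.par^[d u] u = I.hub at h
    rcases hk : d u with _ | k
    · rw [hk] at h; exact absurd h hu
    · rw [hk, Function.iterate_succ_apply] at h
      have : d (I.par u) ≤ k := Nat.find_min' _ h
      omega
  obtain ⟨x, hx, hmax⟩ := Finset.exists_max_image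
    (Finset.univ.filter fun x : I.V => I.Anc v x) d ⟨v, by simpa using ⟨0, rfl⟩⟩
  have hx' : I.Anc v x := by simpa using hx
  refine ⟨x, ?_, hx'⟩
  intro u hu
  by_contra hne
  have huh : u ≠ I.hub := by
    rintro rfl
    exact hne (I.par_hub.symm.trans hu)
  have h1 : d u ≤ d x :=
    hmax u (by simpa using I.aux_anc_trans hx' ⟨1, hu⟩)
  have h2 := hd u huh
  rw [hu] at h2
  omega

theorem aux_cost_le (I : DeliveryInstance) {A B : Set I.V}
    (h : ∀ v ∈ A, ∃ x ∈ B, I.Anc v x) : I.cost A ≤ I.cost B := by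
  unfold cost
  refine Finset.sum_le_sum fun u _ => ?_
  by_cases hu : u = I.hub
  · simp [Set.indicator, hu]
  · refine Set.indicator_le_indicator_apply_of_subset ?_ (I.w_pos u hu).le
    rintro y ⟨hy, v, hv, hyv⟩
    obtain ⟨x, hx, hvx⟩ := h v hv
    exact ⟨hy, x, hx, I.aux_anc_trans hyv hvx⟩

theorem aux_main (I : DeliveryInstance) (π : I.V → Fin I.n) :
    ∃ π' : I.V → Fin I.n, I.NonWasteful π' ∧
      ∀ i : Fin I.n, I.cost (I.bundle π' i) ≤ I.cost (I.bundle π i) := by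
  choose l hl hvl using I.aux_exists_leaf
  refine ⟨fun v => π (l v), ?_, ?_⟩
  · intro v _
    refine ⟨l v, hl v, hvl v, ?_⟩
    obtain ⟨k, hk⟩ := hvl (l v)
    have := I.aux_leaf_desc (hl v) k hk
    simp only [this]
  · intro i
    refine I.aux_cost_le ?_
    rintro v ⟨hv, hi⟩
    refine ⟨l v, ⟨?_, hi⟩, hvl v⟩
    intro hh
    obtain ⟨k, hk⟩ := hvl v
    rw [hh, Function.iterate_fixed I.par_hub] at hk
    exact hv hk.symm

theorem aux_exists_mms (I : DeliveryInstance) : ∃ π : I.V → Fin I.n, I.IsMMS π := by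
  obtain ⟨π, _, h⟩ := Finset.exists_mem_eq_inf' (s := Finset.univ)
    ⟨fun _ => ⟨0, I.n_pos⟩, Finset.mem_univ _⟩ (fun π : I.V → Fin I.n => I.maxCost π)
  refine ⟨π, fun i => ?_⟩
  have h' : I.MMSshare = I.maxCost π := h
  rw [h']
  exact Finset.le_sup' (fun i : Fin I.n => I.cost (I.bundle π i)) (Finset.mem_univ i)

end DeliveryInstance

/-- Every MMS allocation can be turned into an MMS and
non-wasteful allocation without increasing any agent's cost; in particular an
MMS and non-wasteful allocation always exists. -/
theorem stmt9 (I : DeliveryInstance) :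
    (∀ π : I.V → Fin I.n, I.IsMMS π →
      ∃ π' : I.V → Fin I.n, I.IsMMS π' ∧ I.NonWasteful π' ∧
        ∀ i : Fin I.n, I.cost (I.bundle π' i) ≤ I.cost (I.bundle π i)) ∧
    (∃ π : I.V → Fin I.n, I.IsMMS π ∧ I.NonWasteful π) := by
  have key : ∀ π : I.V → Fin I.n, I.IsMMS π →
      ∃ π' : I.V → Fin I.n, I.IsMMS π' ∧ I.NonWasteful π' ∧
        ∀ i : Fin I.n, I.cost (I.bundle π' i) ≤ I.cost (I.bundle π i) := by
    intro π hπ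
    obtain ⟨π', h1, h2⟩ := I.aux_main π
    exact ⟨π', fun i => (h2 i).trans (hπ i), h1, h2⟩
  refine ⟨key, ?_⟩
  obtain ⟨π, hπ⟩ := I.aux_exists_mms
  obtain ⟨π', h1, h2, _⟩ := key π hπ
  exact ⟨π', h1, h2⟩
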